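/- For a₁, a₂, a₃, b₁, b₂, b₃ : ℚ, the system {a₁+a₂+a₃ = 1; b₁+b₂+b₃ = 1; a₂b₁+a₃b₁+a₃b₂ = 1/2; 3(a₂+a₃) − 6a₂a₃b₂ = 2; 3(b₁+b₂) − 6b₁b₂a₂ = 2} holds if and only if the system {a₁+a₂+a₃ = 1; b₁+b₂+b₃ = 1; a₂b₁+a₃(b₁+b₂) = 1/2; a₂b₁²+a₃(b₁+b₂)² = 1/3; (a₂+a₃)²b₁+a₃²b₂ = 1/3} holds. In particular, the rational values a₁ = 7/24, a₂ = 3/4, a₃ = −1/24, b₁ = 2/3, b₂ = −2/3, b₃ = 1 satisfy both systems. -/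

import Mathlib

/-!
With `E = a₂ b₁ + a₃ (b₁ + b₂)`, the following polynomial identities hold:
`a₂ b₁² + a₃ (b₁ + b₂)² = (b₁ + b₂) E - b₁ b₂ a₂` and
`(a₂ + a₃)² b₁ + a₃² b₂ = (a₂ + a₃) E - a₂ a₃ b₂`.
Both systems contain `E = 1 / 2`; substituting it and multiplying by `6` turns the two third-order
conditions of one system into those of the other (in swapped order).
-/

theorem stmt_17 :
    (∀ a₁ a₂ a₃ b₁ b₂ b₃ : ℚ,
      (a₁ + a₂ + a₃ = 1 ∧ b₁ + b₂ + b₃ = 1 ∧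
        a₂ * b₁ + a₃ * b₁ + a₃ * b₂ = 1 / 2 ∧
        3 * (a₂ + a₃) - 6 * (a₂ * a₃ * b₂) = 2 ∧
        3 * (b₁ + b₂) - 6 * (b₁ * b₂ * a₂) = 2) ↔
      (a₁ + a₂ + a₃ = 1 ∧ b₁ + b₂ + b₃ = 1 ∧
        a₂ * b₁ + a₃ * (b₁ + b₂) = 1 / 2 ∧
        a₂ * b₁ ^ 2 + a₃ * (b₁ + b₂) ^ 2 = 1 / 3 ∧
        (a₂ + a₃) ^ 2 * b₁ + a₃ ^ 2 * b₂ = 1 / 3)) ∧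
    ((7 / 24 : ℚ) + 3 / 4 + (-1 / 24) = 1 ∧ (2 / 3 : ℚ) + (-2 / 3) + 1 = 1 ∧
      (3 / 4 : ℚ) * (2 / 3) + (-1 / 24) * (2 / 3) + (-1 / 24) * (-2 / 3) = 1 / 2 ∧
      3 * ((3 / 4 : ℚ) + (-1 / 24)) - 6 * ((3 / 4) * (-1 / 24) * (-2 / 3)) = 2 ∧
      3 * ((2 / 3 : ℚ) + (-2 / 3)) - 6 * ((2 / 3) * (-2 / 3) * (3 / 4)) = 2) ∧
    ((3 / 4 : ℚ) * (2 / 3) + (-1 / 24) * ((2 / 3) + (-2 / 3)) = 1 / 2 ∧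
      (3 / 4 : ℚ) * (2 / 3) ^ 2 + (-1 / 24) * ((2 / 3) + (-2 / 3)) ^ 2 = 1 / 3 ∧
      ((3 / 4 : ℚ) + (-1 / 24)) ^ 2 * (2 / 3) + (-1 / 24) ^ 2 * (-2 / 3) = 1 / 3) := by
  refine ⟨fun a₁ a₂ a₃ b₁ b₂ b₃ => ⟨?_, ?_⟩, by norm_num, by norm_num⟩
  · rintro ⟨h1, h2, h3, h4, h5⟩
    refine ⟨h1, h2, ?_, ?_, ?_⟩
    · linear_combination h3
    · linear_combination (b₁ + b₂) * h3 + h5 / 6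
    · linear_combination (a₂ + a₃) * h3 + h4 / 6
  · rintro ⟨h1, h2, h3, h4, h5⟩
    refine ⟨h1, h2, ?_, ?_, ?_⟩
    · linear_combination h3
    · linear_combination 6 * h5 - 6 * (a₂ + a₃) * h3
    · linear_combination 6 * h4 - 6 * (b₁ + b₂) * h3
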